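/- Let β > 1 and let T : [0,1) → [0,1) be the β-transformation T(x) = βx (mod 1). If φ : [0,1) → ℝ is C^k and φ = χ ∘ T − χ for some measurable function χ : [0,1) → ℝ with e^{−χ} ∈ L¹(m), then there exists a function χ₀ : [0,1) → ℝ which is C^k on (0,1) such that χ₀ = χ almost everywhere with respect to Lebesgue measure m. -/

import Mathlib

/-!
The cohomological equation holds at every point and `χ` is Borel, so Baire category applies. A Borel
function is nearly constant on a residual part of some interval; since `φ` is continuous, this
property is carried along by the expanding branches `x ↦ β x - j` until the interval contains a
break point `j / β`, whose right-hand neighbourhoods are mapped to those of `0`. Hence `χ` has a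
limit `L` at `0⁺` along a residual set. Iterating the inverse branch `x ↦ x / β` gives
`χ x = χ (x / β ^ n) + ∑_{i=1}^{n} φ (x / β ^ i)`, so these sums converge uniformly on a residual
set, hence on `(0,1)`, to a continuous solution `g` of the same equation. Differentiating the series
termwise gains factors `β ^ (-i)`, so `g` is as smooth as `φ`.

The invariant function `χ - g` is constant almost everywhere: for a bounded invariant `u` of mean
zero, the full branches contribute nothing to `F z = ∫₀ᶻ u`, so `F z = F (T z) / β`. At a point
where `|F|` is maximal this forces `F = 0`.
-/

open MeasureTheory Set Filter Topology

noncomputable section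

/-- The unit interval `[0,1)`. -/
def unitI : Set ℝ := Set.Ico 0 1

theorem ae_eq_zero_of_forall_integral_eq_zero {E : Type*} [NormedAddCommGroup E] [NormedSpace ℝ E]
    [CompleteSpace E] {f : ℝ → E} {a b : ℝ} (hf : IntervalIntegrable f volume a b)
    (h : ∀ z ∈ Ioo a b, ∫ x in a..z, f x = 0) : f =ᵐ[volume.restrict (Ioo a b)] 0 := by
  refine (ae_restrict_iff' measurableSet_Ioo).2 ?_
  filter_upwards [hf.ae_hasDerivAt_integral] with x hx hxI
  have hderiv := hx (Icc_subset_uIcc (Ioo_subset_Icc_self hxI)) a left_mem_uIcc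
  have hzero : (fun z ↦ ∫ x in a..z, f x) =ᶠ[𝓝 x] fun _ ↦ 0 := by
    filter_upwards [Ioo_mem_nhds hxI.1 hxI.2] using h
  exact (hderiv.congr_of_eventuallyEq hzero.symm).unique (hasDerivAt_const x 0)

/-- `χ` solves the cohomological equation `χ ∘ T = χ + φ` of the `β`-transformation `T` at every
point of `(0,1)` that `T` does not send to `0`. Writing `T` through its branches `x ↦ β x - j` keeps
the floor function out of continuity arguments. For `φ = 0` this says that `χ` is `T`-invariant. -/
def IsTransferFunction (β : ℝ) (φ χ : ℝ → ℝ) : Prop :=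
  ∀ j : ℤ, ∀ x ∈ Ioo (0 : ℝ) 1, β * x - j ∈ Ioo (0 : ℝ) 1 → χ (β * x - j) = χ x + φ x

namespace IsTransferFunction

variable {β : ℝ} {φ χ u : ℝ → ℝ}

theorem of_fract (h : ∀ x ∈ Ioo (0 : ℝ) 1, φ x = χ (Int.fract (β * x)) - χ x) :
    IsTransferFunction β φ χ := by
  intro j x hx hjx
  have hfract : Int.fract (β * x) = β * x - j :=
    Int.fract_eq_iff.2 ⟨hjx.1.le, hjx.2, j, sub_sub_cancel _ _⟩
  rw [h x hx, hfract, add_sub_cancel]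

theorem sub {ψ g : ℝ → ℝ} (hχ : IsTransferFunction β φ χ) (hg : IsTransferFunction β ψ g) :
    IsTransferFunction β (φ - ψ) (χ - g) := by
  intro j x hx hjx
  simp only [Pi.sub_apply, hχ j x hx hjx, hg j x hx hjx]
  ring

theorem sub_const (h : IsTransferFunction β φ χ) (c : ℝ) :
    IsTransferFunction β φ (fun x ↦ χ x - c) := by
  intro j x hx hjx
  exact (congrArg (· - c) (h j x hx hjx)).trans (add_sub_right_comm _ _ _)

theorem comp_of_invariant (h : IsTransferFunction β 0 u) (f : ℝ → ℝ) :
    IsTransferFunction β 0 (f ∘ u) := by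
  intro j x hx hjx
  simp only [Function.comp_apply, h j x hx hjx, Pi.zero_apply, add_zero]

/-! ### Ergodicity -/

theorem integral_eq_add_branch (hβ : 0 < β) (h : IsTransferFunction β 0 u)
    (hu : IntervalIntegrable u volume 0 1) {j : ℕ} {z : ℝ} (hz : z ≤ 1) (hjz : j ≤ β * z)
    (hzj : β * z ≤ j + 1) :
    ∫ x in (0 : ℝ)..z, u x = (∫ x in (0 : ℝ)..(j / β), u x)
      + β⁻¹ * ∫ x in (0 : ℝ)..(β * z - j), u x := by
  have hj0 : (0 : ℝ) ≤ j / β := by positivity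
  have hjz' : j / β ≤ z := (div_le_iff₀' hβ).2 hjz
  have hsplit : (∫ x in (0 : ℝ)..(j / β), u x) + ∫ x in (j / β)..z, u x
      = ∫ x in (0 : ℝ)..z, u x := by
    apply intervalIntegral.integral_add_adjacent_intervals <;> refine hu.mono_set ?_ <;>
      rw [uIcc_of_le ‹_›, uIcc_of_le zero_le_one]
    exacts [Icc_subset_Icc_right (hjz'.trans hz), Icc_subset_Icc hj0 hz]
  have hbranch : ∫ x in (j / β)..z, u x = ∫ x in (j / β)..z, u (β * x - j) := by
    refine intervalIntegral.integral_congr_Ioo_of_le hjz' fun x hx ↦ ?_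
    have hjx : j < β * x := (div_lt_iff₀' hβ).1 hx.1
    have hxz : β * x < β * z := mul_lt_mul_of_pos_left hx.2 hβ
    have hinv := h j x ⟨hj0.trans_lt hx.1, hx.2.trans_le hz⟩
    rw [Int.cast_natCast, Pi.zero_apply, add_zero] at hinv
    exact (hinv ⟨by linarith, by linarith⟩).symm
  rw [← hsplit, hbranch, intervalIntegral.integral_comp_mul_sub _ hβ.ne', smul_eq_mul,
    mul_div_cancel₀ _ hβ.ne', sub_self]

theorem integral_zero_break_point (hβ : 0 < β) (h : IsTransferFunction β 0 u)
    (hu : IntervalIntegrable u volume 0 1) (hmean : ∫ x in (0 : ℝ)..1, u x = 0) (j : ℕ)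
    (hj : j / β ≤ 1) : ∫ x in (0 : ℝ)..(j / β), u x = 0 := by
  induction j with
  | zero => simp
  | succ j ih =>
    have hle : (j : ℝ) / β ≤ (j + 1 : ℕ) / β := by gcongr; exact j.le_succ
    have hend : β * ((j + 1 : ℕ) / β) = j + 1 := by
      rw [mul_div_cancel₀ _ hβ.ne', Nat.cast_succ]
    rw [h.integral_eq_add_branch hβ hu hj (by linarith) hend.le, ih (hle.trans hj), hend,
      add_sub_cancel_left, hmean, mul_zero, add_zero]

theorem exists_integral_eq_inv_mul (hβ : 0 < β) (h : IsTransferFunction β 0 u)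
    (hu : IntervalIntegrable u volume 0 1) (hmean : ∫ x in (0 : ℝ)..1, u x = 0) {z : ℝ}
    (hz : z ∈ Icc (0 : ℝ) 1) :
    ∃ w ∈ Icc (0 : ℝ) 1, ∫ x in (0 : ℝ)..z, u x = β⁻¹ * ∫ x in (0 : ℝ)..w, u x := by
  have hfloor : ⌊β * z⌋₊ ≤ β * z := Nat.floor_le (mul_nonneg hβ.le hz.1)
  have hfloor' : β * z ≤ ⌊β * z⌋₊ + 1 := (Nat.lt_floor_add_one _).le
  refine ⟨β * z - ⌊β * z⌋₊, ⟨by linarith, by linarith⟩, ?_⟩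
  rw [h.integral_eq_add_branch hβ hu hz.2 hfloor hfloor', add_eq_right]
  exact h.integral_zero_break_point hβ hu hmean _ (((div_le_iff₀' hβ).2 hfloor).trans hz.2)

theorem integral_eq_zero (hβ : 1 < β) (h : IsTransferFunction β 0 u)
    (hu : IntervalIntegrable u volume 0 1) (hmean : ∫ x in (0 : ℝ)..1, u x = 0) {z : ℝ}
    (hz : z ∈ Icc (0 : ℝ) 1) : ∫ x in (0 : ℝ)..z, u x = 0 := by
  have hβ0 : 0 < β := one_pos.trans hβ
  have hcont : ContinuousOn (fun z ↦ |∫ x in (0 : ℝ)..z, u x|) (Icc 0 1) := by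
    have := intervalIntegral.continuousOn_primitive_interval' hu left_mem_uIcc
    rw [uIcc_of_le zero_le_one] at this
    exact this.abs
  obtain ⟨m, hm, hmax⟩ := isCompact_Icc.exists_isMaxOn (nonempty_Icc.2 zero_le_one) hcont
  obtain ⟨w, hw, hmw⟩ := h.exists_integral_eq_inv_mul hβ0 hu hmean hm
  have hself : |∫ x in (0 : ℝ)..m, u x| ≤ β⁻¹ * |∫ x in (0 : ℝ)..m, u x| := calc
    |∫ x in (0 : ℝ)..m, u x| = β⁻¹ * |∫ x in (0 : ℝ)..w, u x| := by
      rw [hmw, abs_mul, abs_of_pos (inv_pos.2 hβ0)]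
    _ ≤ β⁻¹ * |∫ x in (0 : ℝ)..m, u x| :=
      mul_le_mul_of_nonneg_left (hmax hw) (inv_nonneg.2 hβ0.le)
  have hzm : |∫ x in (0 : ℝ)..z, u x| ≤ |∫ x in (0 : ℝ)..m, u x| := hmax hz
  exact abs_nonpos_iff.1 (by nlinarith [inv_lt_one_of_one_lt₀ hβ])

theorem ae_const_of_intervalIntegrable (hβ : 1 < β) (h : IsTransferFunction β 0 u)
    (hu : IntervalIntegrable u volume 0 1) :
    ∃ c, u =ᵐ[volume.restrict (Ioo 0 1)] fun _ ↦ c := by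
  refine ⟨∫ x in (0 : ℝ)..1, u x, ?_⟩
  have hu' := hu.sub (intervalIntegrable_const (c := ∫ x in (0 : ℝ)..1, u x))
  have hmean : ∫ x in (0 : ℝ)..1, (u x - ∫ x in (0 : ℝ)..1, u x) = 0 := by
    rw [intervalIntegral.integral_sub hu intervalIntegrable_const]
    simp
  filter_upwards [ae_eq_zero_of_forall_integral_eq_zero hu' fun z hz ↦
    (h.sub_const _).integral_eq_zero hβ hu' hmean (Ioo_subset_Icc_self hz)] with x hx
  exact sub_eq_zero.1 hx

theorem ae_const (hβ : 1 < β) (h : IsTransferFunction β 0 u)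
    (hu : AEMeasurable u (volume.restrict (Ioo 0 1))) :
    ∃ c, u =ᵐ[volume.restrict (Ioo 0 1)] fun _ ↦ c := by
  -- `arctan` makes `u` bounded without losing information.
  have hint : IntervalIntegrable (Real.arctan ∘ u) volume 0 1 := by
    rw [intervalIntegrable_iff_integrableOn_Ioo_of_le zero_le_one]
    refine Integrable.of_bound (Real.measurable_arctan.comp_aemeasurable hu).aestronglyMeasurable
      (Real.pi / 2) (ae_of_all _ fun x ↦ ?_)
    exact abs_le.2 ⟨(Real.neg_pi_div_two_lt_arctan _).le, (Real.arctan_lt_pi_div_two _).le⟩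
  obtain ⟨c, hc⟩ := (h.comp_of_invariant Real.arctan).ae_const_of_intervalIntegrable hβ hint
  refine ⟨Real.tan c, ?_⟩
  filter_upwards [hc] with x hx
  rw [← hx, Function.comp_apply, Real.tan_arctan]

end IsTransferFunction

/-! ### Sums along a contracting orbit -/

section BackwardSum

variable {E : Type*} [NormedAddCommGroup E] [NormedSpace ℝ E] {a : ℝ} {f : ℝ → E}

/-- The partial sums of `f` along the orbit `a x, a² x, …`. The weights `(a ^ (i + 1)) ^ r` are
those acquired after `r` differentiations in `x`; for `r = 0` and `a = β⁻¹` the sums converge to a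
solution of the cohomological equation. -/
def backwardSum (a : ℝ) (r : ℕ) (f : ℝ → E) (n : ℕ) (x : ℝ) : E :=
  ∑ i ∈ Finset.range n, (a ^ (i + 1)) ^ r • f (a ^ (i + 1) * x)

theorem pow_mul_mem_Ioo (ha0 : 0 < a) (ha1 : a < 1) (n : ℕ) {x : ℝ} (hx : x ∈ Ioo (0 : ℝ) 1) :
    a ^ n * x ∈ Ioo (0 : ℝ) 1 :=
  ⟨mul_pos (pow_pos ha0 n) hx.1,
    (mul_le_of_le_one_left hx.1.le (pow_le_one₀ ha0.le ha1.le)).trans_lt hx.2⟩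

theorem continuousOn_backwardSum (ha0 : 0 < a) (ha1 : a < 1) (hf : ContinuousOn f (Ioo 0 1))
    (r n : ℕ) : ContinuousOn (backwardSum a r f n) (Ioo 0 1) :=
  continuousOn_finsetSum _ fun i _ ↦ (hf.comp (by fun_prop) fun _ hx ↦
    pow_mul_mem_Ioo ha0 ha1 (i + 1) hx).const_smul _

theorem hasDerivAt_backwardSum (ha0 : 0 < a) (ha1 : a < 1) {f' : ℝ → E}
    (hf : ∀ x ∈ Ioo (0 : ℝ) 1, HasDerivAt f (f' x) x) (r n : ℕ) {x : ℝ} (hx : x ∈ Ioo (0 : ℝ) 1) :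
    HasDerivAt (backwardSum a r f n) (backwardSum a (r + 1) f' n x) x := by
  refine HasDerivAt.fun_sum fun i _ ↦ ?_
  have hscale : HasDerivAt (fun y ↦ a ^ (i + 1) * y) (a ^ (i + 1)) x := by
    simpa using (hasDerivAt_id x).const_mul (a ^ (i + 1))
  rw [pow_succ (a ^ (i + 1)), mul_smul]
  exact ((hf _ (pow_mul_mem_Ioo ha0 ha1 (i + 1) hx)).scomp x hscale).const_smul _

theorem exists_tendstoUniformlyOn_backwardSum [CompleteSpace E] (ha0 : 0 < a) (ha1 : a < 1)
    (hf : ContinuousOn f (Ico 0 1)) (r : ℕ) :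
    ∃ g, TendstoUniformlyOn (backwardSum a (r + 1) f) g atTop (Ioo 0 1) := by
  obtain ⟨K, hK⟩ := isCompact_Icc.exists_bound_of_continuousOn
    (hf.mono fun x (hx : x ∈ Icc 0 a) ↦ ⟨hx.1, hx.2.trans_lt ha1⟩)
  have hpow_le (i : ℕ) : a ^ (i + 1) ≤ a := pow_le_of_le_one ha0.le ha1.le i.succ_ne_zero
  have hbound (i : ℕ) (x : ℝ) (hx : x ∈ Ioo (0 : ℝ) 1) :
      ‖(a ^ (i + 1)) ^ (r + 1) • f (a ^ (i + 1) * x)‖ ≤ a ^ (i + 1) * K := by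
    have hp : 0 < a ^ (i + 1) := pow_pos ha0 _
    have hmem : a ^ (i + 1) * x ∈ Icc 0 a :=
      ⟨(mul_pos hp hx.1).le, (mul_le_of_le_one_right hp.le hx.2.le).trans (hpow_le i)⟩
    rw [norm_smul, Real.norm_of_nonneg (by positivity)]
    exact mul_le_mul (pow_le_of_le_one hp.le ((hpow_le i).trans ha1.le) r.succ_ne_zero)
      (hK _ hmem) (norm_nonneg _) hp.le
  have hsummable : Summable fun i : ℕ ↦ a ^ (i + 1) * K :=
    ((summable_nat_add_iff 1).2 (summable_geometric_of_lt_one ha0.le ha1)).mul_right K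
  exact ⟨_, tendstoUniformlyOn_tsum_nat hsummable hbound⟩

theorem contDiffOn_of_tendsto_backwardSum [CompleteSpace E] (ha0 : 0 < a) (ha1 : a < 1) {k r : ℕ}
    {g : ℝ → E} (hf : ContDiffOn ℝ k f (Ico 0 1)) (hg : ContinuousOn g (Ioo 0 1))
    (hlim : ∀ x ∈ Ioo (0 : ℝ) 1, Tendsto (backwardSum a r f · x) atTop (𝓝 (g x))) :
    ContDiffOn ℝ k g (Ioo 0 1) := by
  induction k generalizing r f g with
  | zero => exact contDiffOn_zero.2 hg
  | succ k ih =>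
    rw [Nat.cast_succ] at hf ⊢
    obtain ⟨hdiff, -, hf'⟩ := (contDiffOn_succ_iff_derivWithin (uniqueDiffOn_Ico 0 1)).1 hf
    have hderiv (x : ℝ) (hx : x ∈ Ioo (0 : ℝ) 1) :
        HasDerivAt f (derivWithin f (Ico 0 1) x) x :=
      (hdiff x (Ioo_subset_Ico_self hx)).hasDerivWithinAt.hasDerivAt (Ico_mem_nhds hx.1 hx.2)
    obtain ⟨g', hg'⟩ := exists_tendstoUniformlyOn_backwardSum ha0 ha1 hf'.continuousOn r
    have hg'cont : ContinuousOn g' (Ioo 0 1) := hg'.continuousOn <| Frequently.of_forall fun n ↦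
      continuousOn_backwardSum ha0 ha1 (hf'.continuousOn.mono Ioo_subset_Ico_self) (r + 1) n
    have hgderiv (x : ℝ) (hx : x ∈ Ioo (0 : ℝ) 1) : HasDerivAt g (g' x) x :=
      hasDerivAt_of_tendstoUniformlyOn isOpen_Ioo hg'
        (Eventually.of_forall fun n y hy ↦ hasDerivAt_backwardSum ha0 ha1 hderiv r n hy) hlim hx
    rw [contDiffOn_succ_iff_deriv_of_isOpen isOpen_Ioo]
    exact ⟨fun x hx ↦ (hgderiv x hx).differentiableAt.differentiableWithinAt, by simp,
      (ih hf' hg'cont fun x hx ↦ hg'.tendsto_at hx).congr fun x hx ↦ (hgderiv x hx).deriv⟩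

end BackwardSum

/-! ### Generic oscillation -/

section Generic

theorem nhdsWithin_inf_residual_neBot {X : Type*} [TopologicalSpace X] [BaireSpace X] {s : Set X}
    (hs : IsOpen s) {x : X} (hx : x ∈ closure s) : NeBot (𝓝[s] x ⊓ residual X) := by
  refine inf_neBot_iff.2 fun {v} hv {t} ht ↦ ?_
  obtain ⟨o, ho, hxo, hov⟩ := mem_nhdsWithin.1 hv
  exact ((dense_of_mem_residual ht).inter_open_nonempty (o ∩ s) (ho.inter hs)
    (mem_closure_iff.1 hx o ho hxo)).mono (inter_subset_inter_left t hov)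

theorem tendsto_mul_add_residual {𝕜 : Type*} [DivisionRing 𝕜] [TopologicalSpace 𝕜]
    [IsTopologicalRing 𝕜] {b : 𝕜} (hb : b ≠ 0) (d : 𝕜) :
    Tendsto (fun x ↦ b * x + d) (residual 𝕜) (residual 𝕜) :=
  ((Homeomorph.mulLeft₀ b hb).trans (Homeomorph.addRight d)).residual_map_eq.le

theorem exists_mem_tendsto_inf_principal {X Y : Type*} {f : X → Y} {l F : Filter X} {m : Filter Y}
    [CountableInterFilter F] [m.IsCountablyGenerated] (h : Tendsto f (l ⊓ F) m) :
    ∃ R ∈ F, Tendsto f (l ⊓ 𝓟 R) m := by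
  obtain ⟨b, hb⟩ := m.exists_antitone_basis
  have hpre (n : ℕ) : ∃ s ∈ l, ∃ t ∈ F, s ∩ t ⊆ f ⁻¹' b n := mem_inf_iff_superset.1 (h (hb.mem n))
  choose s hs t ht hst using hpre
  refine ⟨⋂ n, t n, countable_iInter_mem.2 ht, hb.1.tendsto_right_iff.2 fun n _ ↦ ?_⟩
  filter_upwards [inter_mem_inf (hs n) (mem_principal_self _)] with x hx
  exact hst n ⟨hx.1, mem_iInter.1 hx.2 n⟩

variable {X Y : Type*} [TopologicalSpace X] [PseudoMetricSpace Y] {f : X → Y} {ε : ℝ}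

/-- Along `l` and a residual set, `f` stays within some `δ < ε` of a constant. The strict inequality
leaves room for the variation of a continuous function added to `f`. -/
def GenericOscLT (f : X → Y) (ε : ℝ) (l : Filter X) : Prop :=
  ∃ δ < ε, ∃ c, ∀ᶠ y in l ⊓ residual X, dist (f y) c < δ

theorem GenericOscLT.eventually_nhds {x : X} (h : GenericOscLT f ε (𝓝 x)) :
    ∀ᶠ x' in 𝓝 x, GenericOscLT f ε (𝓝 x') := by
  obtain ⟨δ, hδ, c, hc⟩ := h
  obtain ⟨s, hs, t, ht, hst⟩ := mem_inf_iff_superset.1 hc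
  filter_upwards [eventually_mem_nhds_iff.2 hs] with x' hx'
  exact ⟨δ, hδ, c, mem_of_superset (inter_mem_inf hx' ht) hst⟩

theorem eventually_residual_genericOscLT [MeasurableSpace X] [BorelSpace X]
    [TopologicalSpace.SeparableSpace Y] [MeasurableSpace Y] [OpensMeasurableSpace Y]
    (hf : Measurable f) (hε : 0 < ε) : ∀ᶠ x in residual X, GenericOscLT f ε (𝓝 x) := by
  obtain ⟨s, hs, hdense⟩ := TopologicalSpace.exists_countable_dense Y
  have hopen (c : Y) : ∃ U : Set X, IsOpen U ∧ {y | dist (f y) c < ε / 2} =ᵇ U :=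
    (hf Metric.isOpen_ball.measurableSet).residualEq_isOpen
  choose U hUopen hU using hopen
  filter_upwards [(countable_bInter_mem hs).2 fun c _ ↦ (hU c).mem_iff] with x hx
  obtain ⟨c, hcs, hc⟩ := hdense.exists_dist_lt (f x) (half_pos hε)
  have hxU : x ∈ U c := (mem_iInter₂.1 hx c hcs).1 hc
  refine ⟨ε / 2, half_lt_self hε, c, ?_⟩
  filter_upwards [mem_inf_of_left ((hUopen c).mem_nhds hxU), mem_inf_of_right (hU c).mem_iff]
    with y hyU hy using hy.2 hyU

theorem exists_tendsto_of_forall_genericOscLT [CompleteSpace Y] {l : Filter X}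
    [NeBot (l ⊓ residual X)] (h : ∀ ε > 0, GenericOscLT f ε l) :
    ∃ L, Tendsto f (l ⊓ residual X) (𝓝 L) := by
  refine cauchy_map_iff_exists_tendsto.1 (Metric.cauchy_iff.2 ⟨inferInstance, fun ε hε ↦ ?_⟩)
  obtain ⟨δ, hδ, c, hc⟩ := h (ε / 2) (half_pos hε)
  refine ⟨Metric.ball c δ, hc, fun y hy z hz ↦ ?_⟩
  calc dist y z ≤ dist y c + dist z c := dist_triangle_right y z c
    _ < δ + δ := add_lt_add hy hz
    _ < ε := by linarith

end Generic

/-! ### Break points -/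

section BreakPoint

variable {β : ℝ} {U : Set ℝ}

theorem exists_Ioo_subset_of_no_break_point (hβ : 0 < β)
    (hinv : ∀ j : ℤ, ∀ x ∈ U, β * x - j ∈ Ioo (0 : ℝ) 1 → β * x - j ∈ U)
    (hbreak : ∀ j : ℤ, ∀ x ∈ U, β * x ≠ j) {p q : ℝ} (hsub : Ioo p q ⊆ U) :
    ∃ p' q', Ioo p' q' ⊆ U ∧ q' - p' = β * (q - p) := by
  obtain ⟨j, hj⟩ : ∃ j : ℤ, j = ⌊β * p⌋ := ⟨_, rfl⟩
  have hjp : j ≤ β * p := hj ▸ Int.floor_le _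
  have hpj : β * p < j + 1 := hj ▸ Int.lt_floor_add_one _
  have hqj : β * q ≤ j + 1 := by
    by_contra! hlt
    refine hbreak (j + 1) ((j + 1) / β) (hsub ⟨?_, ?_⟩) ?_
    · rwa [lt_div_iff₀' hβ]
    · rwa [div_lt_iff₀' hβ]
    · rw [mul_div_cancel₀ _ hβ.ne']
      push_cast
      rfl
  refine ⟨β * p - j, β * q - j, fun z hz ↦ ?_, by ring⟩
  have hpre : (z + j) / β ∈ Ioo p q :=
    ⟨(lt_div_iff₀' hβ).2 (by linarith [hz.1]), (div_lt_iff₀' hβ).2 (by linarith [hz.2])⟩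
  have hz' : β * ((z + j) / β) - j = z := by rw [mul_div_cancel₀ _ hβ.ne', add_sub_cancel_right]
  have := hinv j _ (hsub hpre)
  rw [hz'] at this
  exact this ⟨by linarith [hz.1], by linarith [hz.2]⟩

theorem exists_break_point_mem (hβ : 1 < β) (hU : U ⊆ Ioo 0 1) (hne : (interior U).Nonempty)
    (hinv : ∀ j : ℤ, ∀ x ∈ U, β * x - j ∈ Ioo (0 : ℝ) 1 → β * x - j ∈ U) :
    ∃ j : ℤ, ∃ x ∈ U, β * x = j := by
  by_contra! hbreak
  obtain ⟨x, hx⟩ := hne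
  obtain ⟨p, q, hxpq, hsub⟩ := mem_nhds_iff_exists_Ioo_subset.1 (mem_interior_iff_mem_nhds.1 hx)
  have hpq : 0 < q - p := sub_pos.2 (hxpq.1.trans hxpq.2)
  have hgrow (n : ℕ) : ∃ p' q', Ioo p' q' ⊆ U ∧ q' - p' = β ^ n * (q - p) := by
    induction n with
    | zero => exact ⟨p, q, hsub, by rw [pow_zero, one_mul]⟩
    | succ n ih =>
      obtain ⟨p₁, q₁, hsub₁, hlen₁⟩ := ih
      obtain ⟨p₂, q₂, hsub₂, hlen₂⟩ :=
        exists_Ioo_subset_of_no_break_point (one_pos.trans hβ) hinv hbreak hsub₁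
      exact ⟨p₂, q₂, hsub₂, by rw [hlen₂, hlen₁, pow_succ', mul_assoc]⟩
  obtain ⟨n, hn⟩ := pow_unbounded_of_one_lt (1 / (q - p)) hβ
  rw [div_lt_iff₀ hpq] at hn
  obtain ⟨p', q', hsub', hlen'⟩ := hgrow n
  obtain ⟨hp', hq'⟩ := (Ioo_subset_Ioo_iff (by linarith)).1 (hsub'.trans hU)
  linarith

end BreakPoint

/-! ### The continuous solution -/

theorem uniformCauchySeqOn_of_subset_closure {ι X Y : Type*} [TopologicalSpace X] [UniformSpace Y]
    {F : ι → X → Y} {p : Filter ι} {s t : Set X} (h : UniformCauchySeqOn F p s)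
    (hF : ∀ n, ContinuousOn (F n) t) (hst : s ⊆ t) (hts : t ⊆ closure s) :
    UniformCauchySeqOn F p t := by
  intro u hu
  obtain ⟨v, ⟨hv, hvclosed⟩, hvu⟩ := uniformity_hasBasis_closed.mem_iff.1 hu
  filter_upwards [h v hv] with m hm x hx
  have hpair : ContinuousWithinAt (fun y ↦ (F m.1 y, F m.2 y)) s x :=
    ((hF m.1 x hx).prodMk (hF m.2 x hx)).mono hst
  exact hvu (hvclosed.closure_subset (hpair.mem_closure (hts hx) hm))

namespace IsTransferFunction

variable {β : ℝ} {φ χ : ℝ → ℝ}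

theorem genericOscLT_image (hβ : β ≠ 0) (h : IsTransferFunction β φ χ) {x ε : ℝ}
    (hx : x ∈ Ioo (0 : ℝ) 1) (hφ : ContinuousAt φ x) (hosc : GenericOscLT χ ε (𝓝 x)) {j : ℤ}
    {l : Filter ℝ} (hl : l ≤ 𝓝 (β * x - j)) (hl01 : Ioo 0 1 ∈ l) : GenericOscLT χ ε l := by
  obtain ⟨δ, hδ, c, hc⟩ := hosc
  have hinverse (z : ℝ) : β * (β⁻¹ * z + β⁻¹ * j) - j = z := by field_simp; ring
  have htendsto : Tendsto (fun z ↦ β⁻¹ * z + β⁻¹ * j) l (𝓝 x) := by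
    have hcont : Continuous fun z : ℝ ↦ β⁻¹ * z + β⁻¹ * j := by fun_prop
    refine (hcont.tendsto' (β * x - j) x ?_).mono_left hl
    field_simp
    ring
  have hclose : ∀ᶠ z in l ⊓ residual ℝ, dist (χ (β⁻¹ * z + β⁻¹ * j)) c < δ :=
    (htendsto.inf (tendsto_mul_add_residual (inv_ne_zero hβ) _)).eventually hc
  have hφclose : ∀ᶠ z in l, dist (φ (β⁻¹ * z + β⁻¹ * j)) (φ x) < (ε - δ) / 2 :=
    htendsto.eventually (Metric.tendsto_nhds.1 hφ _ (by linarith))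
  refine ⟨δ + (ε - δ) / 2, by linarith, c + φ x, ?_⟩
  filter_upwards [hclose, mem_inf_of_left hφclose,
    mem_inf_of_left (htendsto (Ioo_mem_nhds hx.1 hx.2)), mem_inf_of_left hl01]
    with z hχz hφz hz hz01
  have hz_eq := h j _ hz (by rwa [hinverse])
  rw [hinverse] at hz_eq
  rw [hz_eq]
  exact (dist_add_add_le _ _ _ _).trans_lt (add_lt_add hχz hφz)

theorem genericOscLT_nhdsGT_zero (hβ : 1 < β) (h : IsTransferFunction β φ χ)
    (hφ : ContinuousOn φ (Ioo 0 1)) (hχ : Measurable χ) {ε : ℝ} (hε : 0 < ε) :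
    GenericOscLT χ ε (𝓝[>] 0) := by
  have hβ0 : β ≠ 0 := (one_pos.trans hβ).ne'
  have hφat (x : ℝ) (hx : x ∈ Ioo (0 : ℝ) 1) : ContinuousAt φ x :=
    hφ.continuousAt (Ioo_mem_nhds hx.1 hx.2)
  have hne : (interior (Ioo 0 1 ∩ {x | GenericOscLT χ ε (𝓝 x)})).Nonempty := by
    obtain ⟨x, hx, hosc⟩ := (dense_of_mem_residual
      (eventually_residual_genericOscLT hχ hε)).inter_open_nonempty (Ioo 0 1) isOpen_Ioo
      (nonempty_Ioo.2 one_pos)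
    exact ⟨x, mem_interior_iff_mem_nhds.2
      (inter_mem (Ioo_mem_nhds hx.1 hx.2) hosc.eventually_nhds)⟩
  obtain ⟨j, x, ⟨hx, hosc⟩, hj⟩ := exists_break_point_mem hβ inter_subset_left hne
    fun j x hx hjx ↦ ⟨hjx, h.genericOscLT_image hβ0 hx.1 (hφat x hx.1) hx.2 le_rfl
      (Ioo_mem_nhds hjx.1 hjx.2)⟩
  refine h.genericOscLT_image hβ0 hx (hφat x hx) hosc (j := j) ?_ (Ioo_mem_nhdsGT one_pos)
  rw [hj, sub_self]
  exact nhdsWithin_le_nhds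

theorem eq_add_backwardSum (hβ : 1 < β) (h : IsTransferFunction β φ χ) (n : ℕ) {x : ℝ}
    (hx : x ∈ Ioo (0 : ℝ) 1) : χ x = χ (β⁻¹ ^ n * x) + backwardSum β⁻¹ 0 φ n x := by
  have hβ0 : 0 < β := one_pos.trans hβ
  have hmem (m : ℕ) : β⁻¹ ^ m * x ∈ Ioo (0 : ℝ) 1 :=
    pow_mul_mem_Ioo (inv_pos.2 hβ0) (inv_lt_one_of_one_lt₀ hβ) m hx
  induction n with
  | zero => simp [backwardSum]
  | succ n ih =>
    have hbranch : β * (β⁻¹ ^ (n + 1) * x) - (0 : ℤ) = β⁻¹ ^ n * x := by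
      rw [Int.cast_zero, sub_zero, pow_succ', mul_assoc, mul_inv_cancel_left₀ hβ0.ne']
    have hstep := h 0 _ (hmem (n + 1)) (by rw [hbranch]; exact hmem n)
    rw [hbranch] at hstep
    have hsum : backwardSum β⁻¹ 0 φ (n + 1) x
        = backwardSum β⁻¹ 0 φ n x + φ (β⁻¹ ^ (n + 1) * x) := by
      simp [backwardSum, Finset.sum_range_succ]
    rw [ih, hstep, hsum]
    ring

theorem exists_residual_tendstoUniformlyOn (hβ : 1 < β) (h : IsTransferFunction β φ χ)
    (hφ : ContinuousOn φ (Ioo 0 1)) (hχ : Measurable χ) :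
    ∃ L, ∃ R ∈ residual ℝ,
      TendstoUniformlyOn (backwardSum β⁻¹ 0 φ) (fun x ↦ χ x - L) atTop (Ioo 0 1 ∩ R) := by
  have ha0 : 0 < β⁻¹ := inv_pos.2 (one_pos.trans hβ)
  have ha1 : β⁻¹ < 1 := inv_lt_one_of_one_lt₀ hβ
  have : NeBot (𝓝[>] (0 : ℝ) ⊓ residual ℝ) := nhdsWithin_inf_residual_neBot isOpen_Ioi (by simp)
  obtain ⟨L, hL⟩ := exists_tendsto_of_forall_genericOscLT fun ε hε ↦
    h.genericOscLT_nhdsGT_zero hβ hφ hχ (ε := ε) hε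
  obtain ⟨R, hR, hRL⟩ := exists_mem_tendsto_inf_principal hL
  refine ⟨L, {x | ∀ n : ℕ, β⁻¹ ^ n * x + 0 ∈ R}, eventually_countable_forall.2 fun n ↦
    tendsto_mul_add_residual (pow_pos ha0 n).ne' 0 hR, ?_⟩
  refine Metric.tendstoUniformlyOn_iff.2 fun ε hε ↦ ?_
  obtain ⟨δ, hδ, hδL⟩ := mem_nhdsGT_iff_exists_Ioo_subset.1
    (mem_inf_principal.1 (Metric.tendsto_nhds.1 hRL ε hε))
  filter_upwards [(tendsto_pow_atTop_nhds_zero_of_lt_one ha0.le ha1).eventually_lt_const hδ]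
    with n hn x ⟨hx, hxR⟩
  have hsmall : β⁻¹ ^ n * x ∈ Ioo 0 δ :=
    ⟨mul_pos (pow_pos ha0 n) hx.1,
      (mul_le_of_le_one_right (pow_pos ha0 n).le hx.2.le).trans_lt hn⟩
  have hclose : dist (χ (β⁻¹ ^ n * x)) L < ε := hδL hsmall (by simpa using hxR n)
  rw [Real.dist_eq] at hclose ⊢
  rwa [h.eq_add_backwardSum hβ n hx, sub_right_comm, add_sub_cancel_right]

theorem of_eqOn_residual (hβ : β ≠ 0) (h : IsTransferFunction β φ χ)
    (hφ : ContinuousOn φ (Ioo 0 1)) {g : ℝ → ℝ} (hg : ContinuousOn g (Ioo 0 1)) {R : Set ℝ}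
    (hR : R ∈ residual ℝ) (heq : EqOn g χ (Ioo 0 1 ∩ R)) : IsTransferFunction β φ g := by
  intro j x hx hjx
  let V : Set ℝ := Ioo 0 1 ∩ (fun y ↦ β * y - j) ⁻¹' Ioo 0 1
  have hV : IsOpen V := isOpen_Ioo.inter (isOpen_Ioo.preimage (by fun_prop))
  have hres : {y | y ∈ R ∧ β * y - j ∈ R} ∈ residual ℝ := by
    filter_upwards [hR, tendsto_mul_add_residual hβ (-j : ℝ) hR] with y hy hyj
    exact ⟨hy, by rwa [sub_eq_add_neg]⟩
  have hgeneric : EqOn (fun y ↦ g (β * y - j)) (fun y ↦ g y + φ y)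
      (V ∩ {y | y ∈ R ∧ β * y - j ∈ R}) := by
    rintro y ⟨⟨hy, hjy⟩, hyR, hjyR⟩
    simp only [heq ⟨hjy, hjyR⟩, heq ⟨hy, hyR⟩, h j y hy hjy]
  exact hgeneric.of_subset_closure (hg.comp (by fun_prop) fun _ hy ↦ hy.2)
    ((hg.add hφ).mono inter_subset_left) inter_subset_left
    ((dense_of_mem_residual hres).open_subset_closure_inter hV) ⟨hx, hjx⟩

theorem exists_continuousOn (hβ : 1 < β) (h : IsTransferFunction β φ χ)
    (hφ : ContinuousOn φ (Ioo 0 1)) (hχ : Measurable χ) :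
    ∃ g, ContinuousOn g (Ioo 0 1) ∧ IsTransferFunction β φ g ∧
      ∀ x ∈ Ioo (0 : ℝ) 1, Tendsto (backwardSum β⁻¹ 0 φ · x) atTop (𝓝 (g x)) := by
  have hβ0 : 0 < β := one_pos.trans hβ
  have hcont (n : ℕ) : ContinuousOn (backwardSum β⁻¹ 0 φ n) (Ioo 0 1) :=
    continuousOn_backwardSum (inv_pos.2 hβ0) (inv_lt_one_of_one_lt₀ hβ) hφ 0 n
  obtain ⟨L, R, hR, hunif⟩ := h.exists_residual_tendstoUniformlyOn hβ hφ hχ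
  have hcauchy : UniformCauchySeqOn (backwardSum β⁻¹ 0 φ) atTop (Ioo 0 1) :=
    uniformCauchySeqOn_of_subset_closure hunif.uniformCauchySeqOn hcont inter_subset_left
      ((dense_of_mem_residual hR).open_subset_closure_inter isOpen_Ioo)
  choose! g hg using fun x hx ↦ cauchySeq_tendsto_of_complete (hcauchy.cauchySeq (x := x) hx)
  have hgcont : ContinuousOn g (Ioo 0 1) :=
    (hcauchy.tendstoUniformlyOn_of_tendsto hg).continuousOn (Frequently.of_forall hcont)
  have hgeq : EqOn g (fun x ↦ χ x - L) (Ioo 0 1 ∩ R) := fun x hx ↦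
    tendsto_nhds_unique (hg x hx.1) (hunif.tendsto_at hx)
  exact ⟨g, hgcont, (h.sub_const L).of_eqOn_residual hβ0.ne' hφ hgcont hR hgeq, hg⟩

end IsTransferFunction

theorem beta_transformation_livsic_general (β : ℝ) (hβ : 1 < β) (k : ℕ∞)
    (T : ℝ → ℝ) (hT : ∀ x ∈ unitI, T x = Int.fract (β * x))
    (φ χ : ℝ → ℝ) (hφ : ContDiffOn ℝ k φ unitI) (hχ : Measurable χ)
    (hcoh : ∀ x ∈ unitI, φ x = χ (T x) - χ x) :
    ∃ χ₀ : ℝ → ℝ, ContDiffOn ℝ k χ₀ (Ioo 0 1) ∧ χ₀ =ᵐ[volume.restrict unitI] χ := by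
  have htransfer : IsTransferFunction β φ χ := .of_fract fun x hx ↦ by
    rw [hcoh x (Ioo_subset_Ico_self hx), hT x (Ioo_subset_Ico_self hx)]
  obtain ⟨g, hgcont, hg, hlim⟩ :=
    htransfer.exists_continuousOn hβ (hφ.continuousOn.mono Ioo_subset_Ico_self) hχ
  have hgsmooth : ContDiffOn ℝ k g (Ioo 0 1) := contDiffOn_iff_forall_nat_le.2 fun n hn ↦
    contDiffOn_of_tendsto_backwardSum (inv_pos.2 (one_pos.trans hβ)) (inv_lt_one_of_one_lt₀ hβ)
      (hφ.of_le (mod_cast hn)) hgcont hlim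
  have hinvariant : IsTransferFunction β 0 (χ - g) := by simpa using htransfer.sub hg
  obtain ⟨c, hc⟩ := hinvariant.ae_const hβ
    (hχ.aemeasurable.sub (hgcont.aemeasurable measurableSet_Ioo))
  refine ⟨fun x ↦ g x + c, hgsmooth.add contDiffOn_const, ?_⟩
  rw [unitI, ← restrict_Ioo_eq_restrict_Ico]
  filter_upwards [hc] with x hx
  rw [← hx, Pi.sub_apply, add_sub_cancel]

/-- Corollary: for the `β`-transformation `T x = β x (mod 1)`, `β > 1`, if `φ` is `C^k`
and `φ = χ ∘ T - χ` for a measurable `χ` with `e^{-χ} ∈ L¹(m)`, then `χ` has a version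
which is `C^k` on `(0,1)`. -/
theorem beta_transformation_livsic
    (β : ℝ) (hβ : 1 < β) (k : ℕ)
    (T : ℝ → ℝ) (hT : ∀ x ∈ unitI, T x = Int.fract (β * x))
    (φ χ : ℝ → ℝ) (hφ : ContDiffOn ℝ k φ unitI) (hχ : Measurable χ)
    (hcoh : ∀ x ∈ unitI, φ x = χ (T x) - χ x)
    (hint : IntegrableOn (fun x => Real.exp (-χ x)) unitI volume) :
    ∃ χ₀ : ℝ → ℝ, ContDiffOn ℝ k χ₀ (Ioo 0 1) ∧
      χ₀ =ᵐ[volume.restrict unitI] χ :=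
  beta_transformation_livsic_general β hβ k T hT φ χ hφ hχ hcoh

end
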